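/- arXiv:2406.02309 — 2 statements merged into one kernel-verified Lean document; each statement's English description precedes it below -/
import Mathlib

section
/- Let ψ_d be the probability density of Beta(d,d) rescaled and centered, i.e., the density of √(2d)·(2X-1) for X ~ Beta(d,d), and let φ be the standard normal density. Then for every x with |x| < √(2d), the CDF Ψ_d evaluated at 1/2 + x/(2√(2d)) converges to Φ(x) as d → ∞, with error bounded by O(1/√d), where Φ is the standard normal CDF. -/
open MeasureTheory ProbabilityTheory

/-- The symmetric Beta(d,d) measure on ℝ, supported on (0,1). -/
noncomputable def betaMeasure (a : ℝ) : Measure ℝ :=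
  volume.withDensity fun x => ENNReal.ofReal
    (Set.indicator (Set.Ioo (0 : ℝ) 1)
      (fun x => (Real.Gamma (2 * a) / (Real.Gamma a) ^ 2) * x ^ (a - 1) * (1 - x) ^ (a - 1)) x)

/-!
After the substitution `y = 1 / 2 + u / (2 * √(2 * a))` the beta density is proportional to
`(1 - u ^ 2 / (2 * a)) ^ (a - 1)`, which tends to `exp (-u ^ 2 / 2)`. With `t = u ^ 2 / 2`,
Bernoulli's inequality and `1 - s ≤ exp (-s)` bound the difference of the two by
`(t ^ 2 + 2 * t) * exp (-t) / a`, hence by `8 / a * exp (-u ^ 2 / 4)`, uniformly in `u`.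
Integrating, the two unnormalized masses of every set are `O(1 / a)`-close. Taking the set to be
the whole line compares the normalizing constants, so no asymptotics of the Gamma function are
needed.
-/

lemma one_sub_div_rpow_le_mul_exp_neg {a t : ℝ} (ha : 1 ≤ a) (ht : 0 ≤ t) (hta : t ≤ a) :
    (1 - t / a) ^ (a - 1) ≤ (1 + 2 * t / a) * Real.exp (-t) := by
  have ha0 : 0 < a := by linarith
  have hs : t / a ≤ 1 := (div_le_one ha0).2 hta
  have hexp : Real.exp (t / a) ≤ 1 + 2 * t / a := by
    have habs : |t / a| = t / a := abs_of_nonneg (by positivity)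
    have h := le_of_abs_le (Real.abs_exp_sub_one_le (habs.trans_le hs))
    rw [habs] at h
    linarith [mul_div_assoc 2 t a]
  calc (1 - t / a) ^ (a - 1)
      ≤ Real.exp (-(t / a)) ^ (a - 1) :=
        Real.rpow_le_rpow (by linarith) (Real.one_sub_le_exp_neg _) (by linarith)
    _ = Real.exp (t / a) * Real.exp (-t) := by
        rw [← Real.exp_mul, ← Real.exp_add]
        congr 1
        field_simp
        ring
    _ ≤ (1 + 2 * t / a) * Real.exp (-t) := by gcongr

lemma one_sub_sq_mul_exp_neg_le {s : ℝ} (hs : s ≤ 1) :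
    (1 - s ^ 2) * Real.exp (-s) ≤ 1 - s := by
  have h : (1 + s) * Real.exp (-s) ≤ 1 := by
    rw [Real.exp_neg, ← div_eq_mul_inv, div_le_one (Real.exp_pos s), add_comm]
    exact Real.add_one_le_exp s
  calc (1 - s ^ 2) * Real.exp (-s) = (1 - s) * ((1 + s) * Real.exp (-s)) := by ring
    _ ≤ 1 - s := mul_le_of_le_one_right (by linarith) h

lemma mul_exp_neg_le_one_sub_div_rpow {a t : ℝ} (ha : 1 ≤ a) (ht : 0 ≤ t) (hta : t ≤ a) :
    (1 - t ^ 2 / a) * Real.exp (-t) ≤ (1 - t / a) ^ (a - 1) := by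
  have ha0 : 0 < a := by linarith
  have hs0 : 0 ≤ t / a := by positivity
  have hs1 : t / a ≤ 1 := (div_le_one ha0).2 hta
  have hsq : 0 ≤ 1 - (t / a) ^ 2 := sub_nonneg.2 (pow_le_one₀ hs0 hs1)
  have hbernoulli : 1 - t ^ 2 / a ≤ (1 - (t / a) ^ 2) ^ a :=
    calc 1 - t ^ 2 / a = 1 + a * -(t / a) ^ 2 := by field_simp; ring
      _ ≤ (1 + -(t / a) ^ 2) ^ a := one_add_mul_self_le_rpow_one_add (by linarith) ha
      _ = (1 - (t / a) ^ 2) ^ a := by rw [← sub_eq_add_neg]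
  have hexp : Real.exp (-t) = Real.exp (-(t / a)) ^ a := by
    rw [← Real.exp_mul, neg_mul, div_mul_cancel₀ t ha0.ne']
  calc (1 - t ^ 2 / a) * Real.exp (-t)
      ≤ (1 - (t / a) ^ 2) ^ a * Real.exp (-(t / a)) ^ a := by rw [hexp]; gcongr
    _ = ((1 - (t / a) ^ 2) * Real.exp (-(t / a))) ^ a :=
        (Real.mul_rpow hsq (Real.exp_pos _).le).symm
    _ ≤ (1 - t / a) ^ a :=
        Real.rpow_le_rpow (by positivity) (one_sub_sq_mul_exp_neg_le hs1) ha0.le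
    _ ≤ (1 - t / a) ^ (a - 1) :=
        Real.rpow_le_rpow_of_exponent_ge' (by linarith) (by linarith) (by linarith) (by linarith)

lemma abs_one_sub_div_rpow_sub_exp_neg_le {a t : ℝ} (ha : 1 ≤ a) (ht : 0 ≤ t) (hta : t ≤ a) :
    |(1 - t / a) ^ (a - 1) - Real.exp (-t)| ≤ (t ^ 2 + 2 * t) * Real.exp (-t) / a := by
  have hsplit : (t ^ 2 + 2 * t) * Real.exp (-t) / a =
      t ^ 2 / a * Real.exp (-t) + 2 * t / a * Real.exp (-t) := by ring
  have hsq : 0 ≤ t ^ 2 / a * Real.exp (-t) := by positivity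
  have hlin : 0 ≤ 2 * t / a * Real.exp (-t) := by positivity
  rw [hsplit, abs_le]
  constructor
  · linarith [mul_exp_neg_le_one_sub_div_rpow ha ht hta]
  · linarith [one_sub_div_rpow_le_mul_exp_neg ha ht hta]

/-- The density of `√(2 * a) * (2 * X - 1)` for `X ∼ Beta(a, a)` without its normalizing constant,
so that its limit as `a → ∞` is `exp (-u ^ 2 / 2)`. -/
noncomputable def rescaledBetaKernel (a : ℝ) : ℝ → ℝ :=
  (Set.Ioo (-√(2 * a)) √(2 * a)).indicator fun u => (1 - u ^ 2 / (2 * a)) ^ (a - 1)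

lemma one_sub_sq_div_pos_of_mem_Ioo {a u : ℝ} (ha : 0 < a)
    (hu : u ∈ Set.Ioo (-√(2 * a)) √(2 * a)) : 0 < 1 - u ^ 2 / (2 * a) :=
  sub_pos.2 ((div_lt_one (by positivity)).2 (Real.sq_lt.2 hu))

lemma rescaledBetaKernel_nonneg {a : ℝ} (ha : 0 < a) : 0 ≤ rescaledBetaKernel a :=
  Set.indicator_nonneg fun _ hu =>
    Real.rpow_nonneg (one_sub_sq_div_pos_of_mem_Ioo ha hu).le _

lemma integrable_rescaledBetaKernel {a : ℝ} (ha : 1 ≤ a) : Integrable (rescaledBetaKernel a) := by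
  have hcont : Continuous fun u : ℝ => (1 - u ^ 2 / (2 * a)) ^ (a - 1) :=
    Continuous.rpow_const (by fun_prop) fun _ => Or.inr (sub_nonneg.2 ha)
  exact (hcont.integrableOn_Icc.mono_set Set.Ioo_subset_Icc_self).integrable_indicator
    measurableSet_Ioo

lemma integral_rescaledBetaKernel_pos {a : ℝ} (ha : 1 ≤ a) : 0 < ∫ u, rescaledBetaKernel a u := by
  have ha0 : 0 < a := by linarith
  have hr : 0 < √(2 * a) := by positivity
  have hsupport : Set.Ioo (-√(2 * a)) √(2 * a) ⊆ Function.support (rescaledBetaKernel a) := by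
    intro u hu
    rw [Function.mem_support, rescaledBetaKernel, Set.indicator_of_mem hu]
    exact (Real.rpow_pos_of_pos (one_sub_sq_div_pos_of_mem_Ioo ha0 hu) _).ne'
  have hvolume : 0 < volume (Set.Ioo (-√(2 * a)) √(2 * a)) := by
    rw [Real.volume_Ioo, ENNReal.ofReal_pos]
    linarith
  exact (integral_pos_iff_support_of_nonneg (rescaledBetaKernel_nonneg ha0)
    (integrable_rescaledBetaKernel ha)).2 (hvolume.trans_le (measure_mono hsupport))

lemma abs_rescaledBetaKernel_sub_exp_neg_le {a : ℝ} (ha : 1 ≤ a) (u : ℝ) :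
    |rescaledBetaKernel a u - Real.exp (-(1 / 2) * u ^ 2)| ≤
      8 / a * Real.exp (-(1 / 4) * u ^ 2) := by
  have ha0 : 0 < a := by linarith
  obtain ⟨t, ht⟩ : ∃ t, t = u ^ 2 / 2 := ⟨_, rfl⟩
  have ht0 : 0 ≤ t := by rw [ht]; positivity
  have hexp : Real.exp (-(1 / 2) * u ^ 2) = Real.exp (-t) := by rw [ht]; ring_nf
  have hpoly : |rescaledBetaKernel a u - Real.exp (-t)| ≤
      (t ^ 2 + 2 * t) * Real.exp (-t) / a := by
    by_cases hu : u ∈ Set.Ioo (-√(2 * a)) √(2 * a)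
    · have hker : rescaledBetaKernel a u = (1 - t / a) ^ (a - 1) := by
        rw [rescaledBetaKernel, Set.indicator_of_mem hu, ht, div_div]
      rw [hker]
      exact abs_one_sub_div_rpow_sub_exp_neg_le ha ht0 (by linarith [Real.sq_lt.2 hu])
    · have hker : rescaledBetaKernel a u = 0 :=
        Set.indicator_of_notMem hu _
      have hta : a ≤ t := by linarith [not_lt.1 (mt Real.sq_lt.1 hu)]
      rw [hker, zero_sub, abs_neg, Real.abs_exp, le_div_iff₀ ha0, mul_comm]
      gcongr
      nlinarith
  calc |rescaledBetaKernel a u - Real.exp (-(1 / 2) * u ^ 2)|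
      ≤ (t ^ 2 + 2 * t) * Real.exp (-t) / a := by rw [hexp]; exact hpoly
    _ ≤ 8 * Real.exp (t / 2) * Real.exp (-t) / a := by
        gcongr
        linarith [Real.quadratic_le_exp_of_nonneg (div_nonneg ht0 zero_le_two)]
    _ = 8 / a * Real.exp (-(1 / 4) * u ^ 2) := by
        rw [mul_assoc, ← Real.exp_add, mul_div_right_comm, ht]
        ring_nf

lemma integral_abs_rescaledBetaKernel_sub_exp_neg_le {a : ℝ} (ha : 1 ≤ a) :
    ∫ u, |rescaledBetaKernel a u - Real.exp (-(1 / 2) * u ^ 2)| ≤ 8 / a * √(4 * Real.pi) := by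
  calc ∫ u, |rescaledBetaKernel a u - Real.exp (-(1 / 2) * u ^ 2)|
      ≤ ∫ u, 8 / a * Real.exp (-(1 / 4) * u ^ 2) :=
        integral_mono
          ((integrable_rescaledBetaKernel ha).sub (integrable_exp_neg_mul_sq (by norm_num))).abs
          ((integrable_exp_neg_mul_sq (by norm_num)).const_mul _)
          (abs_rescaledBetaKernel_sub_exp_neg_le ha)
    _ = 8 / a * √(4 * Real.pi) := by
        rw [integral_const_mul, integral_gaussian, div_div_eq_mul_div, div_one, mul_comm Real.pi]

section NormalizedIntegrals

lemma abs_div_sub_div_le {G Y F Z : ℝ} (hG : 0 ≤ G) (hGY : G ≤ Y) (hY : 0 < Y) (hZ : 0 < Z) :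
    |G / Y - F / Z| ≤ (|G - F| + |Y - Z|) / Z := by
  have hratio : |G / Y| ≤ 1 := by
    rw [abs_of_nonneg (by positivity)]
    exact (div_le_one hY).2 hGY
  have hdecomp : G / Y - F / Z = ((G - F) - G / Y * (Y - Z)) / Z := by field_simp; ring
  rw [hdecomp, abs_div, abs_of_pos hZ]
  gcongr
  calc |G - F - G / Y * (Y - Z)| ≤ |G - F| + |G / Y * (Y - Z)| := abs_sub _ _
    _ ≤ |G - F| + |Y - Z| := by
        rw [abs_mul]
        gcongr
        exact mul_le_of_le_one_left (abs_nonneg _) hratio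

variable {α : Type*} [MeasurableSpace α] {μ : Measure α} {f g : α → ℝ}

lemma abs_setIntegral_sub_setIntegral_le (hg : Integrable g μ) (hf : Integrable f μ) (s : Set α) :
    |(∫ x in s, g x ∂μ) - ∫ x in s, f x ∂μ| ≤ ∫ x, |g x - f x| ∂μ := by
  rw [← integral_sub hg.integrableOn hf.integrableOn]
  exact abs_integral_le_integral_abs.trans
    (setIntegral_le_integral (hg.sub hf).abs (ae_of_all _ fun _ => abs_nonneg _))

lemma abs_setIntegral_div_integral_sub_le (hg : Integrable g μ) (hf : Integrable f μ)
    (hg0 : 0 ≤ᵐ[μ] g) (hgpos : 0 < ∫ x, g x ∂μ) (hfpos : 0 < ∫ x, f x ∂μ) (s : Set α) :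
    |(∫ x in s, g x ∂μ) / (∫ x, g x ∂μ) - (∫ x in s, f x ∂μ) / ∫ x, f x ∂μ| ≤
      2 * (∫ x, |g x - f x| ∂μ) / ∫ x, f x ∂μ := by
  have htotal : |(∫ x, g x ∂μ) - ∫ x, f x ∂μ| ≤ ∫ x, |g x - f x| ∂μ := by
    simpa only [setIntegral_univ] using abs_setIntegral_sub_setIntegral_le hg hf Set.univ
  refine (abs_div_sub_div_le (setIntegral_nonneg_of_ae hg0) (setIntegral_le_integral hg hg0) hgpos
    hfpos).trans ?_
  rw [two_mul]
  gcongr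
  exact abs_setIntegral_sub_setIntegral_le hg hf s

end NormalizedIntegrals

lemma setIntegral_preimage_add_div {E : Type*} [NormedAddCommGroup E] [NormedSpace ℝ E]
    (p : ℝ → E) {s : Set ℝ} (hs : MeasurableSet s) (b c : ℝ) :
    ∫ u in (fun u => b + u / c) ⁻¹' s, p (b + u / c) = |c| • ∫ y in s, p y := by
  have hpre : MeasurableSet ((fun u => b + u / c) ⁻¹' s) :=
    (by fun_prop : Measurable fun u : ℝ => b + u / c) hs
  calc ∫ u in (fun u => b + u / c) ⁻¹' s, p (b + u / c)
      = ∫ u, s.indicator p (b + u / c) := (integral_indicator hpre).symm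
    _ = |c| • ∫ y, s.indicator p (b + y) :=
        Measure.integral_comp_div (fun y => s.indicator p (b + y)) c
    _ = |c| • ∫ y in s, p y := by rw [integral_add_left_eq_self, integral_indicator hs]

lemma measureReal_withDensity_ofReal {α : Type*} [MeasurableSpace α] {μ : Measure α} {p : α → ℝ}
    (hp : AEStronglyMeasurable p μ) (hp0 : 0 ≤ᵐ[μ] p) {s : Set α} (hs : MeasurableSet s) :
    (μ.withDensity fun y => ENNReal.ofReal (p y)).real s = ∫ y in s, p y ∂μ := by
  rw [integral_eq_lintegral_of_nonneg_ae (ae_restrict_of_ae hp0) hp.restrict, measureReal_def,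
    withDensity_apply _ hs]

lemma cdf_withDensity_add_div {p f : ℝ → ℝ} {b c k : ℝ} (hp : Measurable p) (hp0 : 0 ≤ p)
    [IsProbabilityMeasure (volume.withDensity fun y => ENNReal.ofReal (p y))] (hc : 0 < c)
    (hpf : ∀ u, p (b + u / c) = k * f u) (x : ℝ) :
    cdf (volume.withDensity fun y => ENNReal.ofReal (p y)) (b + x / c) =
      (∫ u in Set.Iic x, f u) / ∫ u, f u := by
  set ν := volume.withDensity fun y => ENNReal.ofReal (p y)
  have hreal : ∀ s, MeasurableSet s →
      ν.real s = k / c * ∫ u in (fun u => b + u / c) ⁻¹' s, f u := by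
    intro s hs
    have h := setIntegral_preimage_add_div p hs b c
    simp only [hpf, integral_const_mul, smul_eq_mul, abs_of_pos hc] at h
    rw [measureReal_withDensity_ofReal hp.aestronglyMeasurable (ae_of_all _ hp0) hs,
      div_mul_eq_mul_div, h, mul_div_cancel_left₀ _ hc.ne']
  have hone : 1 = k / c * ∫ u, f u := by
    simpa only [probReal_univ, Set.preimage_univ, setIntegral_univ] using
      hreal Set.univ MeasurableSet.univ
  have hIic : (fun u => b + u / c) ⁻¹' Set.Iic (b + x / c) = Set.Iic x := by
    ext u
    simp only [Set.mem_preimage, Set.mem_Iic, add_le_add_iff_left, div_le_div_iff_of_pos_right hc]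
  rw [cdf_eq_real, hreal _ measurableSet_Iic, hIic,
    eq_div_iff (right_ne_zero_of_mul_eq_one hone.symm), mul_right_comm, ← hone, one_mul]

lemma cdf_gaussianReal_eq_div (x : ℝ) :
    cdf (gaussianReal 0 1) x =
      (∫ u in Set.Iic x, Real.exp (-(1 / 2) * u ^ 2)) / ∫ u, Real.exp (-(1 / 2) * u ^ 2) := by
  have hpdf : gaussianReal 0 1 =
      volume.withDensity fun y => ENNReal.ofReal (gaussianPDFReal 0 1 y) :=
    gaussianReal_of_var_ne_zero 0 one_ne_zero
  have : IsProbabilityMeasure (volume.withDensity fun y =>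
      ENNReal.ofReal (gaussianPDFReal 0 1 y)) := hpdf ▸ inferInstance
  have hkernel (u : ℝ) : gaussianPDFReal 0 1 (0 + u / 1) =
      (√(2 * Real.pi))⁻¹ * Real.exp (-(1 / 2) * u ^ 2) := by
    simp only [gaussianPDFReal, NNReal.coe_one, mul_one, sub_zero, zero_add, div_one]
    ring_nf
  simpa only [hpdf, zero_add, div_one] using
    cdf_withDensity_add_div (measurable_gaussianPDFReal 0 1) (gaussianPDFReal_nonneg 0 1)
      one_pos hkernel x

lemma betaMeasure_eq_withDensity_betaPDFReal (a : ℝ) :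
    _root_.betaMeasure a = volume.withDensity fun y => ENNReal.ofReal (betaPDFReal a a y) := by
  rw [_root_.betaMeasure]
  congr with y
  simp only [betaPDFReal, Set.indicator_apply, Set.mem_Ioo, beta, one_div_div, two_mul, sq]

lemma betaPDFReal_nonneg {α β : ℝ} (hα : 0 < α) (hβ : 0 < β) : 0 ≤ betaPDFReal α β := by
  intro y
  by_cases hy : 0 < y ∧ y < 1
  · exact (betaPDFReal_pos hy.1 hy.2 hα hβ).le
  · rw [betaPDFReal, if_neg hy, Pi.zero_apply]

lemma betaPDFReal_half_add_div {a : ℝ} (ha : 0 < a) (u : ℝ) :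
    betaPDFReal a a (1 / 2 + u / (2 * √(2 * a))) =
      1 / beta a a * (1 / 4) ^ (a - 1) * rescaledBetaKernel a u := by
  have hr : 0 < √(2 * a) := by positivity
  have hmem : (0 < 1 / 2 + u / (2 * √(2 * a)) ∧ 1 / 2 + u / (2 * √(2 * a)) < 1) ↔
      u ∈ Set.Ioo (-√(2 * a)) √(2 * a) := by
    have hscale : u / (2 * √(2 * a)) = u / √(2 * a) / 2 := by rw [div_div, mul_comm]
    rw [Set.mem_Ioo, ← neg_one_mul, ← lt_div_iff₀ hr, ← div_lt_one hr, hscale]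
    constructor <;> rintro ⟨hlo, hhi⟩ <;> constructor <;> linarith
  have hprod : (1 / 2 + u / (2 * √(2 * a))) * (1 - (1 / 2 + u / (2 * √(2 * a)))) =
      1 / 4 * (1 - u ^ 2 / (2 * a)) := by
    have hsq : √(2 * a) ^ 2 = 2 * a := Real.sq_sqrt (by positivity)
    calc _ = 1 / 4 * (1 - u ^ 2 / √(2 * a) ^ 2) := by field_simp; ring
      _ = 1 / 4 * (1 - u ^ 2 / (2 * a)) := by rw [hsq]
  by_cases hu : u ∈ Set.Ioo (-√(2 * a)) √(2 * a)
  · obtain ⟨hpos, hlt⟩ := hmem.2 hu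
    rw [betaPDFReal, if_pos ⟨hpos, hlt⟩, rescaledBetaKernel, Set.indicator_of_mem hu, mul_assoc,
      ← Real.mul_rpow hpos.le (sub_pos.2 hlt).le, hprod, Real.mul_rpow (by norm_num)
        (one_sub_sq_div_pos_of_mem_Ioo ha hu).le, mul_assoc]
  · rw [betaPDFReal, if_neg (mt hmem.1 hu), rescaledBetaKernel, Set.indicator_of_notMem hu,
      mul_zero]

lemma cdf_betaMeasure_half_add_div {a : ℝ} (ha : 0 < a) (x : ℝ) :
    cdf (_root_.betaMeasure a) (1 / 2 + x / (2 * √(2 * a))) =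
      (∫ u in Set.Iic x, rescaledBetaKernel a u) / ∫ u, rescaledBetaKernel a u := by
  have : IsProbabilityMeasure (volume.withDensity fun y => ENNReal.ofReal (betaPDFReal a a y)) :=
    isProbabilityMeasureBeta ha ha
  rw [betaMeasure_eq_withDensity_betaPDFReal]
  exact cdf_withDensity_add_div (measurable_betaPDFReal a a) (betaPDFReal_nonneg ha ha)
    (by positivity) (betaPDFReal_half_add_div ha) x

theorem betaCDF_tendsto_gaussianCDF_general {a : ℝ} (ha : 1 ≤ a) (x : ℝ) :
    |cdf (_root_.betaMeasure a) (1 / 2 + x / (2 * √(2 * a))) - cdf (gaussianReal 0 1) x| ≤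
      16 * √2 / a := by
  have ha0 : 0 < a := by linarith
  have hgauss : ∫ u, Real.exp (-(1 / 2) * u ^ 2) = √(2 * Real.pi) := by
    rw [integral_gaussian, div_div_eq_mul_div, div_one, mul_comm]
  have hZ : 0 < √(2 * Real.pi) := by positivity
  rw [cdf_betaMeasure_half_add_div ha0, cdf_gaussianReal_eq_div]
  calc _ ≤ 2 * (∫ u, |rescaledBetaKernel a u - Real.exp (-(1 / 2) * u ^ 2)|) /
          ∫ u, Real.exp (-(1 / 2) * u ^ 2) :=
        abs_setIntegral_div_integral_sub_le (integrable_rescaledBetaKernel ha)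
          (integrable_exp_neg_mul_sq (by norm_num)) (ae_of_all _ (rescaledBetaKernel_nonneg ha0))
          (integral_rescaledBetaKernel_pos ha) (hgauss ▸ hZ) (Set.Iic x)
    _ ≤ 2 * (8 / a * √(4 * Real.pi)) / √(2 * Real.pi) := by
        rw [hgauss]
        gcongr
        exact integral_abs_rescaledBetaKernel_sub_exp_neg_le ha
    _ = 16 * √2 / a := by
        rw [show 4 * Real.pi = 2 * (2 * Real.pi) by ring, Real.sqrt_mul zero_le_two]
        field_simp
        norm_num

/-- Convergence of the Beta(d,d) CDF to the standard normal CDF: for every `x` with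
`|x| < √(2d)`, `Ψ_d(1/2 + x/(2√(2d)))` converges to `Φ(x)` as `d → ∞`, with an `O(1/√d)`
error bound. -/
theorem betaCDF_tendsto_gaussianCDF :
    ∃ C > (0 : ℝ), ∀ d : ℕ, 1 ≤ d → ∀ x : ℝ, |x| < Real.sqrt (2 * d) →
      |cdf (betaMeasure (d : ℝ)) (1 / 2 + x / (2 * Real.sqrt (2 * d))) -
          cdf (gaussianReal 0 1) x| ≤ C / Real.sqrt d := by
  refine ⟨16 * √2, by positivity, fun d hd x _ => ?_⟩
  have hd1 : (1 : ℝ) ≤ d := Nat.one_le_cast.2 hd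
  refine (betaCDF_tendsto_gaussianCDF_general hd1 x).trans ?_
  gcongr
  exact Real.sqrt_le_self_iff.2 (Or.inr hd1)
end

section
/- Let d ∈ ℕ₊, k with d - 2k ∈ [1,30] ∩ ℕ, η ∈ {1, 1/2, 1/3, …, 1/50}, and set θ = 0.999, β = 0.99, τ = 0.6, μ = 0.02. Define m = (√(Γ((d-2k+2)/η)/Γ((d-2k)/η))·((1-2τ)μ + √(β + (4τ²-4τ)μ²)))^η. Then θ·Λ_{(d-2k)/η}(m) ≥ 1/2, where Λ_α is the CDF of Gamma(α,1). -/
/-- The regularized lower incomplete gamma function, the CDF of `Γ(α,1)`. -/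
noncomputable def gammaCDF' (α t : ℝ) : ℝ :=
  (1 / Real.Gamma α) * ∫ u in (0 : ℝ)..t, u ^ (α - 1) * Real.exp (-u)

/-!
Write `s = (d - 2k)/η`. The substitution `u ↦ s²/u` exchanges the half-line above the mean `s` of
`Γ(s,1)` with `(0, s)`, and because `2 log x ≤ x - x⁻¹` for `x ≥ 1` it never lowers the mass element
`u ^ (s - 1) * exp (-u) du` on the way down; hence at least half of the mass lies below `s`.
By Stirling's formula the density is at least `e⁻² / √s` on `[s, s + √s]`, so
`Λ_s(s + κ√s) ≥ 1/2 + κ e⁻²` for `0 ≤ κ ≤ 1`. Finally, pairing the factors `s + i` and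
`s + (2n - 1 - i)` of `Γ(s + 2n)/Γ(s) = ∏ (s + i)` shows that this ratio is at least
`(s(s + 2n - 1)) ^ n`, which puts `m` above `(1 + 1/200) s ≥ s + √s/200`; the surplus
`e⁻²/200 ≥ 1/1800` absorbs the factor `θ = 0.999`.
-/

section

open Real Set MeasureTheory

theorem two_mul_log_le_sub_inv {x : ℝ} (hx : 1 ≤ x) : 2 * log x ≤ x - x⁻¹ := by
  have h := self_le_sinh_iff.2 (log_nonneg hx)
  rw [sinh_log (by linarith)] at h
  linarith

theorem image_sq_div_Ioi {c : ℝ} (hc : 0 < c) : (fun x ↦ c ^ 2 / x) '' Ioi c = Ioo 0 c := by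
  ext y
  constructor
  · rintro ⟨x, hx : c < x, rfl⟩
    have hx0 : 0 < x := hc.trans hx
    exact ⟨by positivity, by dsimp only; rw [div_lt_iff₀ hx0]; nlinarith⟩
  · rintro ⟨hy0, hyc⟩
    refine ⟨c ^ 2 / y, ?_, by field_simp⟩
    rw [mem_Ioi, lt_div_iff₀ hy0]
    nlinarith

theorem setIntegral_Ioi_le_setIntegral_Ioo_of_le_sq_div {f : ℝ → ℝ} {c : ℝ} (hc : 0 < c)
    (hf : IntegrableOn f (Ioi 0)) (hle : ∀ x, c < x → f x ≤ c ^ 2 / x ^ 2 * f (c ^ 2 / x)) :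
    ∫ x in Ioi c, f x ≤ ∫ x in Ioo 0 c, f x := by
  have hderiv : ∀ x ∈ Ioi c,
      HasDerivWithinAt (fun x ↦ c ^ 2 / x) (-(c ^ 2 / x ^ 2)) (Ioi c) x := fun x hx ↦ by
    have hx0 : x ≠ 0 := (hc.trans hx).ne'
    simpa only [div_eq_mul_inv, mul_neg] using
      ((hasDerivAt_inv hx0).const_mul (c ^ 2)).hasDerivWithinAt
  have hinj : InjOn (fun x ↦ c ^ 2 / x) (Ioi c) := fun x _ y _ hxy ↦ by
    simpa [div_eq_mul_inv, hc.ne'] using hxy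
  have habs : ∀ x : ℝ, |-(c ^ 2 / x ^ 2)| = c ^ 2 / x ^ 2 := fun x ↦ by
    rw [abs_neg, abs_of_nonneg (by positivity)]
  have hintegrable : IntegrableOn (fun x ↦ c ^ 2 / x ^ 2 * f (c ^ 2 / x)) (Ioi c) := by
    have h := (integrableOn_image_iff_integrableOn_abs_deriv_smul measurableSet_Ioi hderiv hinj
      f).1 ((image_sq_div_Ioi hc).symm ▸ hf.mono_set Ioo_subset_Ioi_self)
    simpa only [habs, smul_eq_mul] using h
  calc ∫ x in Ioi c, f x
      ≤ ∫ x in Ioi c, c ^ 2 / x ^ 2 * f (c ^ 2 / x) :=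
        setIntegral_mono_on (hf.mono_set (Ioi_subset_Ioi hc.le)) hintegrable measurableSet_Ioi hle
    _ = ∫ x in Ioo 0 c, f x := by
        rw [← image_sq_div_Ioi hc,
          integral_image_eq_integral_abs_deriv_smul measurableSet_Ioi hderiv hinj]
        simp only [habs, smul_eq_mul]

theorem rpow_mul_exp_neg_le_sq_div {α u : ℝ} (hα : 0 < α) (hu : α < u) :
    u ^ (α - 1) * exp (-u) ≤
      α ^ 2 / u ^ 2 * ((α ^ 2 / u) ^ (α - 1) * exp (-(α ^ 2 / u))) := by
  have hu0 : 0 < u := hα.trans hu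
  have hlog : 2 * α * (log u - log α) ≤ u - α ^ 2 / u := by
    have h := mul_le_mul_of_nonneg_left
      (two_mul_log_le_sub_inv ((one_le_div hα).2 hu.le)) hα.le
    rw [log_div hu0.ne' hα.ne'] at h
    calc 2 * α * (log u - log α) = α * (2 * (log u - log α)) := by ring
      _ ≤ α * (u / α - (u / α)⁻¹) := h
      _ = u - α ^ 2 / u := by field_simp
  have hsq : α ^ 2 / u ^ 2 = exp (2 * log α - 2 * log u) := by
    rw [exp_sub, ← log_rpow hα, ← log_rpow hu0, exp_log (by positivity), exp_log (by positivity),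
      rpow_two, rpow_two]
  have hlog_div : log (α ^ 2 / u) = 2 * log α - log u := by
    rw [log_div (by positivity) hu0.ne', log_pow, Nat.cast_ofNat]
  rw [rpow_def_of_pos hu0, rpow_def_of_pos (by positivity), hsq, hlog_div, ← exp_add, ← exp_add,
    ← exp_add, exp_le_exp]
  linarith

theorem integrableOn_rpow_mul_exp_neg {α : ℝ} (hα : 0 < α) :
    IntegrableOn (fun u ↦ u ^ (α - 1) * exp (-u)) (Ioi 0) := by
  simpa only [mul_comm] using GammaIntegral_convergent hα

theorem intervalIntegrable_rpow_mul_exp_neg {α s t : ℝ} (hα : 0 < α) (hs : 0 ≤ s) (ht : 0 ≤ t) :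
    IntervalIntegrable (fun u ↦ u ^ (α - 1) * exp (-u)) volume s t :=
  intervalIntegrable_iff.2 <| (integrableOn_rpow_mul_exp_neg hα).mono_set fun _ hu ↦
    (le_min hs ht).trans_lt hu.1

theorem gammaCDF'_add_integral {α s t : ℝ} (hα : 0 < α) (hs : 0 ≤ s) (ht : 0 ≤ t) :
    gammaCDF' α s + 1 / Gamma α * ∫ u in s..t, u ^ (α - 1) * exp (-u) = gammaCDF' α t := by
  rw [gammaCDF', gammaCDF', ← mul_add, intervalIntegral.integral_add_adjacent_intervals
    (intervalIntegrable_rpow_mul_exp_neg hα le_rfl hs)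
    (intervalIntegrable_rpow_mul_exp_neg hα hs ht)]

theorem gammaCDF'_monotoneOn {α : ℝ} (hα : 0 < α) : MonotoneOn (gammaCDF' α) (Ici 0) := by
  intro s hs t ht hst
  have hnonneg : 0 ≤ ∫ u in s..t, u ^ (α - 1) * exp (-u) :=
    intervalIntegral.integral_nonneg hst fun u hu ↦
      mul_nonneg (rpow_nonneg (le_trans hs hu.1) _) (exp_pos _).le
  rw [← gammaCDF'_add_integral hα hs ht]
  exact le_add_of_nonneg_right
    (mul_nonneg (one_div_nonneg.2 (Gamma_pos_of_pos hα).le) hnonneg)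

theorem half_le_gammaCDF'_self {α : ℝ} (hα : 0 < α) : 1 / 2 ≤ gammaCDF' α α := by
  have hintegrable := integrableOn_rpow_mul_exp_neg hα
  have hreflect := setIntegral_Ioi_le_setIntegral_Ioo_of_le_sq_div hα hintegrable
    fun u hu ↦ rpow_mul_exp_neg_le_sq_div hα hu
  have hbelow : ∫ u in (0 : ℝ)..α, u ^ (α - 1) * exp (-u) =
      ∫ u in Ioo 0 α, u ^ (α - 1) * exp (-u) := by
    rw [intervalIntegral.integral_of_le hα.le, integral_Ioc_eq_integral_Ioo]
  have htotal : Gamma α = (∫ u in (0 : ℝ)..α, u ^ (α - 1) * exp (-u)) +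
      ∫ u in Ioi α, u ^ (α - 1) * exp (-u) := by
    rw [Gamma_eq_integral hα, intervalIntegral.integral_of_le hα.le,
      ← setIntegral_union Ioc_disjoint_Ioi_same measurableSet_Ioi
        (hintegrable.mono_set Ioc_subset_Ioi_self) (hintegrable.mono_set (Ioi_subset_Ioi hα.le)),
      Ioc_union_Ioi_eq_Ioi hα.le]
    simp only [mul_comm]
  rw [gammaCDF', one_div_mul_eq_div, le_div_iff₀ (Gamma_pos_of_pos hα)]
  linarith

theorem exp_neg_one_mul_le_rpow_mul_exp_neg {α u : ℝ} (hα : 1 ≤ α) (hu : α ≤ u)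
    (hu' : u ≤ α + √α) :
    exp (-1) * (α ^ (α - 1) * exp (-α)) ≤ u ^ (α - 1) * exp (-u) := by
  have hα0 : 0 < α := by linarith
  have hu0 : 0 < u := by linarith
  have hsq : (u - α) ^ 2 ≤ α := (le_sqrt (by linarith) hα0.le).1 (by linarith)
  have hlog : 1 - α / u ≤ log u - log α := by
    simpa only [inv_div, log_div hu0.ne' hα0.ne'] using
      one_sub_inv_le_log_of_pos (div_pos hu0 hα0)
  have hexponent : -1 + u - α ≤ (α - 1) * (log u - log α) :=
    calc -1 + u - α ≤ (α - 1) * (1 - α / u) := by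
          rw [one_sub_div hu0.ne', mul_div_assoc', le_div_iff₀ hu0]
          linarith
      _ ≤ (α - 1) * (log u - log α) := mul_le_mul_of_nonneg_left hlog (by linarith)
  rw [rpow_def_of_pos hα0, rpow_def_of_pos hu0, ← exp_add, ← exp_add, ← exp_add, exp_le_exp]
  linarith

theorem factorial_le_stirling {n : ℕ} (hn : n ≠ 0) :
    (n.factorial : ℝ) ≤ exp 1 * √n * (n / exp 1) ^ n := by
  obtain ⟨k, rfl⟩ := Nat.exists_eq_succ_of_ne_zero hn
  have h : Stirling.stirlingSeq (k + 1) ≤ Stirling.stirlingSeq 1 :=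
    Stirling.stirlingSeq'_antitone k.zero_le
  rw [Stirling.stirlingSeq_one, Stirling.stirlingSeq, div_le_iff₀ (by positivity),
    sqrt_mul zero_le_two] at h
  refine h.trans_eq ?_
  field_simp

theorem Gamma_natCast_le {n : ℕ} (hn : n ≠ 0) :
    Gamma n ≤ exp 1 * √n * ((n : ℝ) ^ ((n : ℝ) - 1) * exp (-n)) := by
  have hn0 : (0 : ℝ) < n := by positivity
  have hfactorial : n * Gamma n = (n.factorial : ℝ) := by
    rw [← Gamma_add_one hn0.ne', Gamma_nat_eq_factorial]
  refine le_of_mul_le_mul_left ?_ hn0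
  calc n * Gamma n ≤ exp 1 * √n * (n / exp 1) ^ n := hfactorial ▸ factorial_le_stirling hn
    _ = n * (exp 1 * √n * ((n : ℝ) ^ ((n : ℝ) - 1) * exp (-n))) := by
        rw [rpow_sub_one hn0.ne', rpow_natCast, div_pow, ← exp_nat_mul, mul_one, exp_neg]
        field_simp

theorem half_add_le_gammaCDF' {n : ℕ} (hn : n ≠ 0) {κ : ℝ} (hκ : 0 ≤ κ) (hκ' : κ ≤ 1) :
    1 / 2 + κ * exp (-2) ≤ gammaCDF' n (n + κ * √n) := by
  have hn0 : (0 : ℝ) < n := by positivity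
  have hn1 : (1 : ℝ) ≤ n := Nat.one_le_cast.2 (Nat.one_le_iff_ne_zero.2 hn)
  have hΓ : 0 < Gamma n := Gamma_pos_of_pos hn0
  have hend : (n : ℝ) ≤ n + κ * √n := le_add_of_nonneg_right (by positivity)
  have hend' : n + κ * √n ≤ n + √n := by gcongr; exact mul_le_of_le_one_left (sqrt_nonneg _) hκ'
  set p : ℝ := (n : ℝ) ^ ((n : ℝ) - 1) * exp (-n)
  have hmass : κ * √n * (exp (-1) * p) ≤
      ∫ u in (n : ℝ)..(n + κ * √n), u ^ ((n : ℝ) - 1) * exp (-u) := by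
    have h := intervalIntegral.integral_mono_on hend (intervalIntegrable_const (μ := volume))
      (intervalIntegrable_rpow_mul_exp_neg hn0 hn0.le (hn0.le.trans hend))
      fun u hu ↦ exp_neg_one_mul_le_rpow_mul_exp_neg hn1 hu.1 (hu.2.trans hend')
    rwa [intervalIntegral.integral_const, smul_eq_mul, add_sub_cancel_left] at h
  have hincrement : κ * exp (-2) ≤
      1 / Gamma n * ∫ u in (n : ℝ)..(n + κ * √n), u ^ ((n : ℝ) - 1) * exp (-u) := by
    rw [one_div_mul_eq_div, le_div_iff₀ hΓ]
    calc κ * exp (-2) * Gamma n ≤ κ * exp (-2) * (exp 1 * √n * p) := by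
          gcongr; exact Gamma_natCast_le hn
      _ = κ * √n * (exp (-1) * p) := by
          rw [show (-1 : ℝ) = -2 + 1 by norm_num, exp_add]; ring
      _ ≤ _ := hmass
  rw [← gammaCDF'_add_integral hn0 hn0.le (hn0.le.trans hend)]
  exact add_le_add (half_le_gammaCDF'_self hn0) hincrement

theorem half_add_le_gammaCDF'_of_mul_le {n : ℕ} (hn : n ≠ 0) {κ t : ℝ} (hκ : 0 ≤ κ)
    (hκ' : κ ≤ 1) (ht : (1 + κ) * n ≤ t) : 1 / 2 + κ * exp (-2) ≤ gammaCDF' n t := by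
  have hsqrt : √(n : ℝ) ≤ n :=
    sqrt_le_self_iff.2 (Or.inr (Nat.one_le_cast.2 (Nat.one_le_iff_ne_zero.2 hn)))
  have h0 : 0 ≤ n + κ * √(n : ℝ) := by positivity
  have hle : n + κ * √n ≤ t := by
    linarith [mul_le_mul_of_nonneg_left hsqrt hκ]
  exact (half_add_le_gammaCDF' hn hκ hκ').trans
    (gammaCDF'_monotoneOn (by positivity) h0 (h0.trans hle) hle)

theorem Gamma_add_natCast_div_Gamma {s : ℝ} (hs : 0 < s) (k : ℕ) :
    Gamma (s + k) / Gamma s = ∏ i ∈ Finset.range k, (s + i) := by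
  induction k with
  | zero => simp [(Gamma_pos_of_pos hs).ne']
  | succ k ih =>
    rw [Finset.prod_range_succ, ← ih, Nat.cast_succ, ← add_assoc, Gamma_add_one (by positivity)]
    ring

theorem pow_le_prod_range_add_sq {s : ℝ} (hs : 0 ≤ s) (k : ℕ) :
    (s * (s + k - 1)) ^ k ≤ (∏ i ∈ Finset.range k, (s + i)) ^ 2 := by
  have hpair : ∀ i ∈ Finset.range k,
      s * (s + k - 1) ≤ (s + i) * (s + (k - 1 - i : ℕ)) := by
    intro i hi
    have hsum : ((k - 1 - i : ℕ) : ℝ) = k - 1 - i := by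
      rw [Nat.cast_sub (by grind), Nat.cast_sub (by grind), Nat.cast_one]
    have hprod : (0 : ℝ) ≤ i * (k - 1 - i : ℕ) := by positivity
    rw [hsum] at hprod ⊢
    linarith
  calc (s * (s + k - 1)) ^ k = ∏ _i ∈ Finset.range k, s * (s + k - 1) := by
        rw [Finset.prod_const, Finset.card_range]
    _ ≤ ∏ i ∈ Finset.range k, (s + i) * (s + (k - 1 - i : ℕ)) := by
        refine Finset.prod_le_prod (fun i hi ↦ mul_nonneg hs ?_) hpair
        have : (1 : ℝ) ≤ k := by
          exact_mod_cast (Nat.zero_le i).trans_lt (Finset.mem_range.1 hi)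
        linarith
    _ = (∏ i ∈ Finset.range k, (s + i)) ^ 2 := by
        rw [Finset.prod_mul_distrib, Finset.prod_range_reflect (fun i : ℕ ↦ s + (i : ℝ)), sq]

theorem pow_le_Gamma_add_two_mul_div_Gamma {s : ℝ} (hs : 0 < s) (n : ℕ) :
    (s * (s + 2 * n - 1)) ^ n ≤ Gamma (s + 2 * n) / Gamma s := by
  have h := pow_le_prod_range_add_sq hs.le (2 * n)
  rw [← Gamma_add_natCast_div_Gamma hs, mul_comm 2 n, pow_mul, Nat.cast_mul, Nat.cast_ofNat,
    mul_comm (n : ℝ) 2] at h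
  exact le_of_sq_le_sq h (div_pos (Gamma_pos_of_pos (by positivity)) (Gamma_pos_of_pos hs)).le

theorem mul_le_rpow_sqrt_Gamma_div_Gamma {s c l : ℝ} {n : ℕ} (hs : 0 < s) (hn : n ≠ 0)
    (hl : 0 ≤ l) (hc : 0 ≤ c) (hc' : c ≤ 1) (h : l ^ 2 * s ≤ c ^ 2 * (s + 2 * n - 1)) :
    l * s ≤ (√(Gamma (s + 2 * n) / Gamma s) * c) ^ ((1 : ℝ) / n) := by
  have hratio : 0 ≤ Gamma (s + 2 * n) / Gamma s :=
    (div_pos (Gamma_pos_of_pos (by positivity)) (Gamma_pos_of_pos hs)).le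
  have hpow : (l * s) ^ n ≤ √(Gamma (s + 2 * n) / Gamma s) * c := by
    refine le_of_sq_le_sq ?_ (by positivity)
    calc ((l * s) ^ n) ^ 2 = (s * (l ^ 2 * s)) ^ n := by ring
      _ ≤ (s * (c ^ 2 * (s + 2 * n - 1))) ^ n := by gcongr
      _ = (s * (s + 2 * n - 1)) ^ n * (c ^ 2) ^ n := by rw [← mul_pow]; congr 1; ring
      _ ≤ Gamma (s + 2 * n) / Gamma s * c ^ 2 := by
          gcongr
          · exact pow_le_Gamma_add_two_mul_div_Gamma hs n
          · exact pow_le_of_le_one (by positivity) (pow_le_one₀ hc hc') hn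
      _ = (√(Gamma (s + 2 * n) / Gamma s) * c) ^ 2 := by rw [mul_pow, sq_sqrt hratio]
  calc l * s = ((l * s) ^ n) ^ ((1 : ℝ) / n) := by
        rw [one_div, pow_rpow_inv_natCast (by positivity) hn]
    _ ≤ _ := by gcongr

theorem one_div_nine_le_exp_neg_two : 1 / 9 ≤ exp (-2) := by
  have h : exp 2 ≤ 9 := calc
    exp 2 = exp 1 ^ 2 := by rw [← exp_nat_mul]; norm_num
    _ ≤ 3 ^ 2 := by gcongr; exact exp_one_lt_three.le
    _ = 9 := by norm_num
  rw [exp_neg, one_div]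
  gcongr

theorem le_one_sub_two_mul_add_sqrt : (0.99 : ℝ) ≤ (1 - 2 * (0.6 : ℝ)) * (0.02 : ℝ) +
    √((0.99 : ℝ) + (4 * (0.6 : ℝ) ^ 2 - 4 * 0.6) * (0.02 : ℝ) ^ 2) := by
  have h : (0.994 : ℝ) ≤ √((0.99 : ℝ) + (4 * (0.6 : ℝ) ^ 2 - 4 * 0.6) * (0.02 : ℝ) ^ 2) :=
    le_sqrt_of_sq_le (by norm_num)
  linarith

end

theorem dsrs_numeric_lower_bound_general (d k n : ℕ) (hn : 1 ≤ n)
    (h1 : 2 * k + 1 ≤ d) (h30 : d ≤ 2 * k + 30) :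
    (1 : ℝ) / 2 ≤
      (0.999 : ℝ) *
        gammaCDF' (((d : ℝ) - 2 * k) / ((1 : ℝ) / n))
          ((Real.sqrt
              (Real.Gamma (((d : ℝ) - 2 * k + 2) / ((1 : ℝ) / n)) /
                Real.Gamma (((d : ℝ) - 2 * k) / ((1 : ℝ) / n))) *
            ((1 - 2 * (0.6 : ℝ)) * (0.02 : ℝ) +
              Real.sqrt ((0.99 : ℝ) + (4 * (0.6 : ℝ) ^ 2 - 4 * 0.6) * (0.02 : ℝ) ^ 2))) ^
            ((1 : ℝ) / n)) := by
  obtain ⟨j, rfl⟩ : ∃ j, d = 2 * k + j := ⟨d - 2 * k, by omega⟩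
  have hN : j * n ≠ 0 := mul_ne_zero (by omega) (by omega)
  have hshape : (((2 * k + j : ℕ) : ℝ) - 2 * k) / ((1 : ℝ) / n) = (j * n : ℕ) := by
    push_cast; rw [div_div_eq_mul_div]; ring
  have hshape_add : (((2 * k + j : ℕ) : ℝ) - 2 * k + 2) / ((1 : ℝ) / n) =
      (j * n : ℕ) + 2 * n := by
    push_cast; rw [div_div_eq_mul_div]; ring
  have hn1 : (1 : ℝ) ≤ n := by exact_mod_cast hn
  have hj : ((j * n : ℕ) : ℝ) ≤ 30 * n := by
    exact_mod_cast Nat.mul_le_mul_right n (show j ≤ 30 by omega)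
  have hm := mul_le_rpow_sqrt_Gamma_div_Gamma (s := (j * n : ℕ)) (n := n) (c := 0.99)
    (l := 1 + 1 / 200) (by positivity) (by omega) (by norm_num) (by norm_num) (by norm_num)
    (by linarith)
  rw [hshape, hshape_add]
  calc (1 : ℝ) / 2 ≤ 0.999 * (1 / 2 + 1 / 200 * Real.exp (-2)) := by
        linarith [one_div_nine_le_exp_neg_two]
    _ ≤ _ := by
        gcongr
        refine half_add_le_gammaCDF'_of_mul_le hN (by norm_num) (by norm_num) (hm.trans ?_)
        gcongr
        exact le_one_sub_two_mul_add_sqrt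

/-- For `d - 2k ∈ [1,30] ∩ ℕ`, `η ∈ {1, 1/2, …, 1/50}`, and `θ = 0.999`, `β = 0.99`,
`τ = 0.6`, `μ = 0.02`, with
`m = (√(Γ((d-2k+2)/η)/Γ((d-2k)/η))·((1-2τ)μ + √(β + (4τ²-4τ)μ²)))^η`,
we have `θ·Λ_{(d-2k)/η}(m) ≥ 1/2`. -/
theorem dsrs_numeric_lower_bound (d k n : ℕ) (hn : 1 ≤ n) (hn50 : n ≤ 50)
    (h1 : 2 * k + 1 ≤ d) (h30 : d ≤ 2 * k + 30) :
    (1 : ℝ) / 2 ≤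
      (0.999 : ℝ) *
        gammaCDF' (((d : ℝ) - 2 * k) / ((1 : ℝ) / n))
          ((Real.sqrt
              (Real.Gamma (((d : ℝ) - 2 * k + 2) / ((1 : ℝ) / n)) /
                Real.Gamma (((d : ℝ) - 2 * k) / ((1 : ℝ) / n))) *
            ((1 - 2 * (0.6 : ℝ)) * (0.02 : ℝ) +
              Real.sqrt ((0.99 : ℝ) + (4 * (0.6 : ℝ) ^ 2 - 4 * 0.6) * (0.02 : ℝ) ^ 2))) ^
            ((1 : ℝ) / n)) := by
  exact dsrs_numeric_lower_bound_general d k n hn h1 h30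
end
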